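/- arXiv:math/0610854 — 5 statements merged into one kernel-verified Lean document; each statement's English description precedes it below -/
import Mathlib

section
/- Let T ≥ 1 and let 𝒩_0, 𝒩_1, …, 𝒩_T be subsets of 𝒩 such that 𝒩_0 = {k₀} is a singleton and 𝒩_T = 𝒩. Let α : {0,…,T−1} → [0,1] be such that for every t ∈ {0,…,T−1} and every k ∈ 𝒩_{t+1} one has Σ_{l∈𝒩_t} γ_{k,l}(t) ≥ α(t). Then every solution x of the consensus system satisfies Δ(T) ≤ (1 − ∏_{t=0}^{T−1} α(t))·Δ(0). -/
/-- The diameter of a finite family of reals: max minus min. -/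
noncomputable def diam {N : Type*} [Fintype N] [Nonempty N] (y : N → ℝ) : ℝ :=
  Finset.univ.sup' Finset.univ_nonempty y - Finset.univ.inf' Finset.univ_nonempty y

open Finset in
/-- A weighted average of values bounded below by `m`, and by `m + d` on `S`, is at least
`m + a * d` when `S` carries weight at least `a`. -/
lemma add_mul_le_sum_mul_of_weight_le {N : Type*} [Fintype N] {w y : N → ℝ} {S : Finset N}
    {m d a : ℝ} (hw : ∀ l, 0 ≤ w l) (hsum : ∑ l, w l = 1) (hy : ∀ l, m ≤ y l) (hd : 0 ≤ d)
    (hS : ∀ l ∈ S, m + d ≤ y l) (ha : a ≤ ∑ l ∈ S, w l) :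
    m + a * d ≤ ∑ l, w l * y l := by
  have hsplit : ∑ l, w l * (y l - m) = ∑ l, w l * y l - m := by
    simp only [mul_sub, sum_sub_distrib, ← sum_mul, hsum, one_mul]
  have hle : a * d ≤ ∑ l, w l * (y l - m) :=
    calc a * d ≤ (∑ l ∈ S, w l) * d := mul_le_mul_of_nonneg_right ha hd
      _ = ∑ l ∈ S, w l * d := sum_mul ..
      _ ≤ ∑ l ∈ S, w l * (y l - m) := sum_le_sum fun l hl =>
          mul_le_mul_of_nonneg_left (by linarith [hS l hl]) (hw l)
      _ ≤ ∑ l, w l * (y l - m) := sum_le_sum_of_subset_of_nonneg (subset_univ S)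
          fun l _ _ => mul_nonneg (hw l) (sub_nonneg.2 (hy l))
  linarith

/-- A lower bound of the initial state of a consensus system bounds all later states. -/
lemma le_consensus_solution {N : Type*} [Fintype N] {Γ : ℕ → Matrix N N ℝ}
    (hnn : ∀ t k l, 0 ≤ Γ t k l) (hrow : ∀ t k, ∑ l, Γ t k l = 1) {x : ℕ → N → ℝ}
    (hx : ∀ t, x (t + 1) = (Γ t).mulVec (x t)) {m : ℝ} (hm : ∀ k, m ≤ x 0 k) (t : ℕ) (k : N) :
    m ≤ x t k := by
  induction t generalizing k with
  | zero => exact hm k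
  | succ t ih =>
    rw [hx]
    simpa [Matrix.mulVec, dotProduct] using
      add_mul_le_sum_mul_of_weight_le (S := ∅) (a := 0) (d := 0) (hnn t k) (hrow t k) ih
        le_rfl (by simp) (by simp)

/-- Along a settling tree rooted at `k₀`, the agents reached at time `t` keep at least the fraction
`∏ s < t, α s` of the initial excess of `k₀` over a lower bound `m`. -/
lemma add_prod_mul_le_consensus_solution {N : Type*} [Fintype N] {Γ : ℕ → Matrix N N ℝ}
    (hnn : ∀ t k l, 0 ≤ Γ t k l) (hrow : ∀ t k, ∑ l, Γ t k l = 1) {T : ℕ} {Ns : ℕ → Finset N}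
    {k₀ : N} (hN0 : Ns 0 = {k₀}) {α : ℕ → ℝ} (hα : ∀ t < T, 0 ≤ α t)
    (hmain : ∀ t < T, ∀ k ∈ Ns (t + 1), α t ≤ ∑ l ∈ Ns t, Γ t k l) {x : ℕ → N → ℝ}
    (hx : ∀ t, x (t + 1) = (Γ t).mulVec (x t)) {m : ℝ} (hm : ∀ k, m ≤ x 0 k)
    {t : ℕ} (ht : t ≤ T) {k : N} (hk : k ∈ Ns t) :
    m + (∏ s ∈ Finset.range t, α s) * (x 0 k₀ - m) ≤ x t k := by
  induction t generalizing k with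
  | zero =>
    obtain rfl : k = k₀ := by simpa [hN0] using hk
    simp
  | succ t ih =>
    have hprod : 0 ≤ ∏ s ∈ Finset.range t, α s :=
      Finset.prod_nonneg fun s hs => hα s (by have := Finset.mem_range.1 hs; omega)
    rw [hx, Finset.prod_range_succ, mul_comm _ (α t), mul_assoc]
    exact add_mul_le_sum_mul_of_weight_le (hnn t k) (hrow t k)
      (le_consensus_solution hnn hrow hx hm t) (mul_nonneg hprod (sub_nonneg.2 (hm k₀)))
      (fun l hl => ih (by omega) hl) (hmain t ht k hk)

/-- Contraction along a single settling spanning-tree: if `𝒩₀ = {k₀}`, `𝒩_T = 𝒩` and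
every agent of `𝒩_{t+1}` receives at time `t` a total weight at least `α(t)` from `𝒩_t`,
then `Δ(T) ≤ (1 - ∏ α(t)) Δ(0)`. -/
theorem diam_contraction_single_tree
    {N : Type*} [Fintype N] [Nonempty N]
    (Γ : ℕ → Matrix N N ℝ)
    (hnn : ∀ t k l, 0 ≤ Γ t k l)
    (hrow : ∀ t k, ∑ l, Γ t k l = 1)
    (T : ℕ) (hT : 1 ≤ T)
    (Ns : ℕ → Finset N) (k₀ : N)
    (hN0 : Ns 0 = {k₀})
    (hNT : Ns T = Finset.univ)
    (α : ℕ → ℝ)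
    (hα : ∀ t < T, α t ∈ Set.Icc (0 : ℝ) 1)
    (hmain : ∀ t < T, ∀ k ∈ Ns (t + 1), α t ≤ ∑ l ∈ Ns t, Γ t k l)
    (x : ℕ → N → ℝ)
    (hx : ∀ t, x (t + 1) = (Γ t).mulVec (x t)) :
    diam (x T) ≤ (1 - ∏ t ∈ Finset.range T, α t) * diam (x 0) := by
  set m := Finset.univ.inf' Finset.univ_nonempty (x 0) with hm
  set M := Finset.univ.sup' Finset.univ_nonempty (x 0) with hM
  set P := ∏ t ∈ Finset.range T, α t
  have hα0 : ∀ t < T, 0 ≤ α t := fun t ht => (hα t ht).1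
  have hlower : ∀ k, m + P * (x 0 k₀ - m) ≤ x T k := fun k =>
    add_prod_mul_le_consensus_solution hnn hrow hN0 hα0 hmain hx
      (fun k => Finset.inf'_le _ (Finset.mem_univ k)) le_rfl (by simp [hNT])
  have hupper : ∀ k, x T k ≤ M - P * (M - x 0 k₀) := fun k => by
    have h := add_prod_mul_le_consensus_solution (x := fun t => -x t) (m := -M) (k := k) hnn hrow
      hN0 hα0 hmain (fun t => by rw [hx, Matrix.mulVec_neg])
      (fun k => neg_le_neg (Finset.le_sup' _ (Finset.mem_univ k))) le_rfl (by simp [hNT])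
    simp only [Pi.neg_apply] at h
    linarith
  have hsup := Finset.sup'_le Finset.univ_nonempty (x T) fun k _ => hupper k
  have hinf := Finset.le_inf' Finset.univ_nonempty (x T) fun k _ => hlower k
  unfold diam
  rw [← hm, ← hM]
  linarith
end

section
/- Let T ≥ 1 and let 𝒩_0, 𝒩_1, …, 𝒩_T be subsets of 𝒩 such that 𝒩_0 = {k₀} is a singleton and 𝒩_T = 𝒩, and let α : {0,…,T−1} → [0,1] be such that for every t ∈ {0,…,T−1} and every k ∈ 𝒩_{t+1} one has Σ_{l∈𝒩_t} γ_{k,l}(t) ≥ α(t). Then every entry of the k₀-th column of the ordered matrix product Γ(T−1)·Γ(T−2)···Γ(0) is at least ∏_{t=0}^{T−1} α(t); that is, (Γ(T−1)···Γ(0))_{l,k₀} ≥ ∏_{t=0}^{T−1} α(t) for every l ∈ 𝒩. -/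
/-- The ordered (time-decreasing) product `Γ(T-1) ⬝ Γ(T-2) ⬝ ⋯ ⬝ Γ(0)`. -/
noncomputable def prodRev {N : Type*} [Fintype N] [DecidableEq N]
    (Γ : ℕ → Matrix N N ℝ) : ℕ → Matrix N N ℝ
  | 0 => 1
  | t + 1 => Γ t * prodRev Γ t

/-- The ordered product of entrywise nonnegative matrices is entrywise nonnegative. -/
theorem prodRev_nonneg {N : Type*} [Fintype N] [DecidableEq N] {Γ : ℕ → Matrix N N ℝ}
    (hnn : ∀ t k l, 0 ≤ Γ t k l) (t : ℕ) (k l : N) : 0 ≤ prodRev Γ t k l := by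
  induction t generalizing k with
  | zero =>
    rw [prodRev, Matrix.one_apply]
    split_ifs <;> norm_num
  | succ t ih =>
    rw [prodRev, Matrix.mul_apply]
    exact Finset.sum_nonneg fun j _ => mul_nonneg (hnn t k j) (ih j)

/-- If each row of `Γ t` indexed by `Ns (t + 1)` has mass at least `α t` on `Ns t`, then the
entries of the `k₀`-th column of the ordered product in the rows `Ns t` are at least
`∏_{s<t} α(s)`. -/
theorem prod_le_prodRev_of_mem {N : Type*} [Fintype N] [DecidableEq N]
    {Γ : ℕ → Matrix N N ℝ} (hnn : ∀ t k l, 0 ≤ Γ t k l) {T : ℕ} {Ns : ℕ → Finset N} {k₀ : N}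
    (hN0 : Ns 0 = {k₀}) {α : ℕ → ℝ} (hα : ∀ t < T, 0 ≤ α t)
    (hmain : ∀ t < T, ∀ k ∈ Ns (t + 1), α t ≤ ∑ l ∈ Ns t, Γ t k l)
    {t : ℕ} (ht : t ≤ T) {k : N} (hk : k ∈ Ns t) :
    ∏ s ∈ Finset.range t, α s ≤ prodRev Γ t k k₀ := by
  induction t generalizing k with
  | zero =>
    rw [hN0, Finset.mem_singleton] at hk
    rw [Finset.prod_range_zero, prodRev, hk, Matrix.one_apply_eq]
  | succ t ih =>
    have hprod : 0 ≤ ∏ s ∈ Finset.range t, α s :=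
      Finset.prod_nonneg fun s hs => hα s ((Finset.mem_range.mp hs).trans ht)
    calc ∏ s ∈ Finset.range (t + 1), α s
        = α t * ∏ s ∈ Finset.range t, α s := by rw [Finset.prod_range_succ, mul_comm]
      _ ≤ (∑ l ∈ Ns t, Γ t k l) * ∏ s ∈ Finset.range t, α s :=
        mul_le_mul_of_nonneg_right (hmain t ht k hk) hprod
      _ = ∑ l ∈ Ns t, Γ t k l * ∏ s ∈ Finset.range t, α s := Finset.sum_mul _ _ _
      _ ≤ ∑ l ∈ Ns t, Γ t k l * prodRev Γ t l k₀ :=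
        Finset.sum_le_sum fun l hl =>
          mul_le_mul_of_nonneg_left (ih (Nat.le_of_succ_le ht) hl) (hnn t k l)
      _ ≤ ∑ l, Γ t k l * prodRev Γ t l k₀ :=
        Finset.sum_le_sum_of_subset_of_nonneg (Finset.subset_univ _) fun l _ _ =>
          mul_nonneg (hnn t k l) (prodRev_nonneg hnn t l k₀)
      _ = prodRev Γ (t + 1) k k₀ := by rw [prodRev, Matrix.mul_apply]

/-- Under the single-spanning-tree hypotheses, every entry of the `k₀`-th column of
`Γ(T-1)⋯Γ(0)` is at least `∏_{t<T} α(t)`. -/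
theorem column_lower_bound_single_tree
    {N : Type*} [Fintype N] [Nonempty N] [DecidableEq N]
    (Γ : ℕ → Matrix N N ℝ)
    (hnn : ∀ t k l, 0 ≤ Γ t k l)
    (hrow : ∀ t k, ∑ l, Γ t k l = 1)
    (T : ℕ) (hT : 1 ≤ T)
    (Ns : ℕ → Finset N) (k₀ : N)
    (hN0 : Ns 0 = {k₀})
    (hNT : Ns T = Finset.univ)
    (α : ℕ → ℝ)
    (hα : ∀ t < T, α t ∈ Set.Icc (0 : ℝ) 1)
    (hmain : ∀ t < T, ∀ k ∈ Ns (t + 1), α t ≤ ∑ l ∈ Ns t, Γ t k l) :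
    ∀ l : N, ∏ t ∈ Finset.range T, α t ≤ prodRev Γ T l k₀ := by
  intro l
  exact prod_le_prodRev_of_mem hnn hN0 (fun t ht => (hα t ht).1) hmain le_rfl
    (hNT ▸ Finset.mem_univ l)
end

section
/- Let ℐ be a finite nonempty index set. For each t ∈ ℕ and i ∈ ℐ let M_i(t) be a nonempty subset of 𝒩, and set Δ_i(t) = max_{k∈M_i(t)} x_k(t) − min_{k∈M_i(t)} x_k(t). For each k ∈ 𝒩, j ∈ ℐ and t ∈ ℕ let M_{k,j}(t) ⊆ M_j(t) be sets with M_{k,j}(t) ∩ M_{k,j'}(t) = ∅ whenever j ≠ j'. Let numbers c_{i,j}(t) ≥ 0 satisfy c_{i,j}(t) ≤ Σ_{l∈M_{k,j}(t)} γ_{k,l}(t) for every k ∈ M_i(t+1), and put C(t) = (c_{i,j}(t))_{i,j∈ℐ}. Then for every solution x of the consensus system, all t, T ∈ ℕ and every i ∈ ℐ, writing P = C(t+T−1)·C(t+T−2)···C(t) (with P the identity matrix when T = 0), one has 0 ≤ Δ_i(t+T) ≤ Σ_{j∈ℐ} P_{i,j}·Δ_j(t) + (1 − Σ_{j∈ℐ}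 P_{i,j})·Δ(t). -/
/-- The diameter of `y` restricted to a finite subset `s` (zero if `s` is empty). -/
noncomputable def diamOn {N : Type*} (s : Finset N) (y : N → ℝ) : ℝ :=
  if h : s.Nonempty then s.sup' h y - s.inf' h y else 0

/-- The ordered (time-decreasing) product of `d` matrices starting at time `s`:
`C(s+d-1) ⬝ C(s+d-2) ⬝ ⋯ ⬝ C(s)` (the identity when `d = 0`). -/
noncomputable def prodRevFrom {I : Type*} [Fintype I] [DecidableEq I]
    (C : ℕ → Matrix I I ℝ) (s : ℕ) : ℕ → Matrix I I ℝ
  | 0 => 1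
  | d + 1 => C (s + d) * prodRevFrom C s d

lemma diamOn_of_nonempty {N : Type*} {s : Finset N} (h : s.Nonempty) (y : N → ℝ) :
    diamOn s y = s.sup' h y - s.inf' h y :=
  dif_pos h

lemma diamOn_nonneg {N : Type*} (s : Finset N) (y : N → ℝ) : 0 ≤ diamOn s y := by
  by_cases h : s.Nonempty
  · rw [diamOn_of_nonempty h]
    obtain ⟨k, hk⟩ := h
    exact sub_nonneg.2 ((Finset.inf'_le y hk).trans (Finset.le_sup' y hk))
  · simp [diamOn, h]

/-- If nonnegative weights `w` put mass at least `c j` on pairwise disjoint sets `A j`, on which a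
nonnegative function `g` is at least `r j`, then the weighted sum of `g` is at least
`∑ j, c j * r j`. -/
lemma sum_mul_le_sum_mul_of_disjoint {N I : Type*} [Fintype N] [Fintype I]
    {w g : N → ℝ} (hw : ∀ l, 0 ≤ w l) (hg : ∀ l, 0 ≤ g l) {A : I → Finset N}
    (hA : Pairwise fun j j' => Disjoint (A j) (A j')) {c r : I → ℝ}
    (hc : ∀ j, c j ≤ ∑ l ∈ A j, w l) (hr : ∀ j, 0 ≤ r j) (hrg : ∀ j, ∀ l ∈ A j, r j ≤ g l) :
    ∑ j, c j * r j ≤ ∑ l, w l * g l := by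
  classical
  calc ∑ j, c j * r j ≤ ∑ j, ∑ l ∈ A j, w l * g l := by
        refine Finset.sum_le_sum fun j _ => ?_
        calc c j * r j ≤ (∑ l ∈ A j, w l) * r j := mul_le_mul_of_nonneg_right (hc j) (hr j)
          _ = ∑ l ∈ A j, w l * r j := Finset.sum_mul ..
          _ ≤ ∑ l ∈ A j, w l * g l :=
            Finset.sum_le_sum fun l hl => mul_le_mul_of_nonneg_left (hrg j l hl) (hw l)
    _ = ∑ l ∈ Finset.univ.biUnion A, w l * g l :=
        (Finset.sum_biUnion fun j _ j' _ hne => hA hne).symm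
    _ ≤ ∑ l, w l * g l :=
        Finset.sum_le_sum_of_subset_of_nonneg (Finset.subset_univ _)
          fun l _ _ => mul_nonneg (hw l) (hg l)

lemma sum_mul_const_sub {N : Type*} [Fintype N] {w : N → ℝ} (hw : ∑ l, w l = 1) (y : N → ℝ)
    (S : ℝ) : ∑ l, w l * (S - y l) = S - ∑ l, w l * y l := by
  simp [mul_sub, Finset.sum_sub_distrib, ← Finset.sum_mul, hw]

lemma sum_mul_sub_const {N : Type*} [Fintype N] {w : N → ℝ} (hw : ∑ l, w l = 1) (y : N → ℝ)
    (m : ℝ) : ∑ l, w l * (y l - m) = ∑ l, w l * y l - m := by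
  simp [mul_sub, Finset.sum_sub_distrib, ← Finset.sum_mul, hw]

lemma mulVec_mem_Icc {N : Type*} [Fintype N] {G : Matrix N N ℝ} (hnn : ∀ k l, 0 ≤ G k l)
    (hrow : ∀ k, ∑ l, G k l = 1) {y : N → ℝ} {m S : ℝ} (hy : ∀ l, y l ∈ Set.Icc m S) (k : N) :
    G.mulVec y k ∈ Set.Icc m S := by
  have hS : 0 ≤ ∑ l, G k l * (S - y l) :=
    Finset.sum_nonneg fun l _ => mul_nonneg (hnn k l) (sub_nonneg.2 (hy l).2)
  have hm : 0 ≤ ∑ l, G k l * (y l - m) :=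
    Finset.sum_nonneg fun l _ => mul_nonneg (hnn k l) (sub_nonneg.2 (hy l).1)
  rw [sum_mul_const_sub (hrow k)] at hS
  rw [sum_mul_sub_const (hrow k)] at hm
  exact ⟨sub_nonneg.1 hm, sub_nonneg.1 hS⟩

/-- One step of the consensus dynamics: the defect `(S - m) - Δ` of the diameter of the new values
on `s` dominates the `c`-weighted sum of the defects of the old diameters on the sets `B j`. -/
lemma sum_mul_diamOn_defect_le {N I : Type*} [Fintype N] [Fintype I]
    {G : Matrix N N ℝ} (hnn : ∀ k l, 0 ≤ G k l) (hrow : ∀ k, ∑ l, G k l = 1)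
    {s : Finset N} (hs : s.Nonempty) {B : I → Finset N} (hB : ∀ j, (B j).Nonempty)
    {A : N → I → Finset N} (hAB : ∀ k j, A k j ⊆ B j)
    (hA : ∀ k, Pairwise fun j j' => Disjoint (A k j) (A k j')) {c : I → ℝ}
    (hc : ∀ j, ∀ k ∈ s, c j ≤ ∑ l ∈ A k j, G k l)
    {y : N → ℝ} {m S : ℝ} (hy : ∀ l, y l ∈ Set.Icc m S) :
    ∑ j, c j * ((S - m) - diamOn (B j) y) ≤ (S - m) - diamOn s (G.mulVec y) := by
  have hsup : s.sup' hs (G.mulVec y) ≤ S - ∑ j, c j * (S - (B j).sup' (hB j) y) := by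
    refine Finset.sup'_le _ _ fun k hk => le_sub_comm.1 ?_
    refine (sum_mul_le_sum_mul_of_disjoint (hnn k) (fun l => sub_nonneg.2 (hy l).2) (hA k)
      (fun j => hc j k hk) (fun j => sub_nonneg.2 (Finset.sup'_le _ _ fun l _ => (hy l).2))
      fun j l hl => sub_le_sub_left (Finset.le_sup' y (hAB k j hl)) S).trans_eq ?_
    exact sum_mul_const_sub (hrow k) y S
  have hinf : m + ∑ j, c j * ((B j).inf' (hB j) y - m) ≤ s.inf' hs (G.mulVec y) := by
    refine Finset.le_inf' _ _ fun k hk => le_sub_iff_add_le'.1 ?_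
    refine (sum_mul_le_sum_mul_of_disjoint (hnn k) (fun l => sub_nonneg.2 (hy l).1) (hA k)
      (fun j => hc j k hk) (fun j => sub_nonneg.2 (Finset.le_inf' _ _ fun l _ => (hy l).1))
      fun j l hl => sub_le_sub_right (Finset.inf'_le y (hAB k j hl)) m).trans_eq ?_
    exact sum_mul_sub_const (hrow k) y m
  have hsplit : ∑ j, c j * ((S - m) - diamOn (B j) y) =
      ∑ j, c j * (S - (B j).sup' (hB j) y) + ∑ j, c j * ((B j).inf' (hB j) y - m) := by
    rw [← Finset.sum_add_distrib]
    refine Finset.sum_congr rfl fun j _ => ?_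
    rw [diamOn_of_nonempty (hB j)]
    ring
  rw [hsplit, diamOn_of_nonempty hs]
  linarith

/-- Iterating a one-step lower bound by nonnegative matrices. -/
lemma sum_prodRevFrom_mul_le {I : Type*} [Fintype I] [DecidableEq I] {C : ℕ → Matrix I I ℝ}
    (hC : ∀ u i j, 0 ≤ C u i j) (t : ℕ) {d : ℕ → I → ℝ}
    (hd : ∀ T i, ∑ j, C (t + T) i j * d T j ≤ d (T + 1) i) (T : ℕ) (i : I) :
    ∑ j, prodRevFrom C t T i j * d 0 j ≤ d T i := by
  induction T generalizing i with
  | zero => simp [prodRevFrom, Matrix.one_apply]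
  | succ T ih =>
    calc ∑ j, prodRevFrom C t (T + 1) i j * d 0 j
        = ∑ j, C (t + T) i j * ∑ l, prodRevFrom C t T j l * d 0 l := by
          simp only [prodRevFrom, Matrix.mul_apply, Finset.sum_mul, Finset.mul_sum, mul_assoc]
          exact Finset.sum_comm
      _ ≤ ∑ j, C (t + T) i j * d T j :=
          Finset.sum_le_sum fun j _ => mul_le_mul_of_nonneg_left (ih j) (hC _ _ _)
      _ ≤ d (T + 1) i := hd T i

/-- Lemma A.1 (fundamental inequalities): with `P = C(t+T-1)⋯C(t)`, for every `i`,
`0 ≤ Δ_i(t+T) ≤ Σ_j P_{i,j} Δ_j(t) + (1 - Σ_j P_{i,j}) Δ(t)`. -/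
theorem fundamental_diameter_inequalities
    {N I : Type*} [Fintype N] [Nonempty N] [Fintype I] [Nonempty I] [DecidableEq I]
    (Γ : ℕ → Matrix N N ℝ)
    (hnn : ∀ t k l, 0 ≤ Γ t k l)
    (hrow : ∀ t k, ∑ l, Γ t k l = 1)
    (M : I → ℕ → Finset N)
    (hMne : ∀ i t, (M i t).Nonempty)
    (Mk : N → I → ℕ → Finset N)
    (hMk : ∀ k j t, Mk k j t ⊆ M j t)
    (hdisj : ∀ k (j j' : I) t, j ≠ j' → Disjoint (Mk k j t) (Mk k j' t))
    (c : I → I → ℕ → ℝ)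
    (hc0 : ∀ i j t, 0 ≤ c i j t)
    (hc : ∀ i j t, ∀ k ∈ M i (t + 1), c i j t ≤ ∑ l ∈ Mk k j t, Γ t k l)
    (x : ℕ → N → ℝ)
    (hx : ∀ t, x (t + 1) = (Γ t).mulVec (x t)) :
    ∀ t T : ℕ, ∀ i : I,
      0 ≤ diamOn (M i (t + T)) (x (t + T)) ∧
      diamOn (M i (t + T)) (x (t + T)) ≤
        (∑ j, prodRevFrom (fun u => Matrix.of fun a b => c a b u) t T i j
            * diamOn (M j t) (x t))
        + (1 - ∑ j, prodRevFrom (fun u => Matrix.of fun a b => c a b u) t T i j)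
            * diam (x t) := by
  intro t T i
  refine ⟨diamOn_nonneg _ _, ?_⟩
  set S := Finset.univ.sup' Finset.univ_nonempty (x t)
  set m := Finset.univ.inf' Finset.univ_nonempty (x t)
  have hbound : ∀ u l, x (t + u) l ∈ Set.Icc m S := by
    intro u
    induction u with
    | zero =>
      exact fun l => ⟨Finset.inf'_le _ (Finset.mem_univ l), Finset.le_sup' _ (Finset.mem_univ l)⟩
    | succ u ih =>
      intro l
      rw [← add_assoc, hx]
      exact mulVec_mem_Icc (hnn _) (hrow _) ih l
  have key := sum_prodRevFrom_mul_le (C := fun u => Matrix.of fun a b => c a b u)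
    (fun u a b => hc0 a b u) t (d := fun u a => (S - m) - diamOn (M a (t + u)) (x (t + u)))
    (fun u a => by
      rw [← add_assoc, hx]
      exact sum_mul_diamOn_defect_le (hnn _) (hrow _) (hMne _ _) (fun j => hMne j _)
        (fun k j => hMk k j _) (fun k j j' => hdisj k j j' _) (fun j => hc a j _) (hbound u)) T i
  have hdiam : diam (x t) = S - m := rfl
  simp only [add_zero, mul_sub _ (S - m), Finset.sum_sub_distrib, ← Finset.sum_mul] at key
  rw [hdiam]
  linarith
end

section
/- Let n ≥ 2 and q ≥ 1 be integers and γ ∈ (0,1). Then 1 − γ^{n−1}·Σ_{i=0}^{q−1} (1−γ)^i·C(n+i−2, n−2) = (γ^{n−1}/(n−2)!)·f^{(n−2)}(1−γ), where f is the function f(δ) = δ^{n+q−2}/(1−δ) and f^{(n−2)}(1−γ) denotes its (n−2)-th derivative evaluated at the point δ = 1−γ (which lies in (0,1), where f is smooth). -/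
/-- The `m`-th derivative of `x ↦ 1 / (1 - x)`. -/
theorem iteratedDeriv_inv_one_sub (m : ℕ) (x : ℝ) :
    iteratedDeriv m (fun δ : ℝ => (1 - δ)⁻¹) x = m.factorial * ((1 - x) ^ (m + 1))⁻¹ := by
  have h := congrFun (iteratedDeriv_comp_const_sub m (fun y : ℝ => y⁻¹) 1) x
  rw [h, iteratedDeriv_eq_iterate, iter_deriv_inv]
  have hz : (1 - x) ^ (-1 - m : ℤ) = ((1 - x) ^ (m + 1))⁻¹ := by
    rw [← zpow_natCast, ← zpow_neg]
    congr 1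
    push_cast
    ring
  rw [hz, smul_eq_mul, ← mul_assoc, ← mul_assoc, ← mul_pow]
  simp

/-- The `m`-th derivative of the geometric sum `∑ j < m + q, x ^ j`. -/
theorem iteratedDeriv_geom_sum (m q : ℕ) (x : ℝ) :
    iteratedDeriv m (fun δ : ℝ => ∑ j ∈ Finset.range (m + q), δ ^ j) x =
      m.factorial * ∑ i ∈ Finset.range q, x ^ i * ((m + i).choose m : ℝ) := by
  rw [iteratedDeriv_fun_sum fun j _ => by fun_prop]
  simp only [iteratedDeriv_pow]
  rw [Finset.sum_range_add, Finset.sum_eq_zero, zero_add, Finset.mul_sum]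
  · refine Finset.sum_congr rfl fun i _ => ?_
    rw [Nat.descFactorial_eq_factorial_mul_choose, Nat.add_sub_cancel_left]
    push_cast
    ring
  · intro j hj
    rw [Nat.descFactorial_of_lt (Finset.mem_range.mp hj)]
    simp

/-- The `m`-th derivative of `x ↦ x ^ (m + q) / (1 - x)` away from the pole. -/
theorem iteratedDeriv_pow_div_one_sub (m q : ℕ) {x : ℝ} (hx : x ≠ 1) :
    iteratedDeriv m (fun δ : ℝ => δ ^ (m + q) / (1 - δ)) x =
      m.factorial * (((1 - x) ^ (m + 1))⁻¹ -
        ∑ i ∈ Finset.range q, x ^ i * ((m + i).choose m : ℝ)) := by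
  have heq : (fun δ : ℝ => δ ^ (m + q) / (1 - δ)) =ᶠ[nhds x]
      fun δ => (1 - δ)⁻¹ - ∑ j ∈ Finset.range (m + q), δ ^ j := by
    filter_upwards [isOpen_ne.mem_nhds hx] with δ hδ
    have h1 : δ - 1 ≠ 0 := sub_ne_zero.mpr hδ
    have h2 : 1 - δ ≠ 0 := sub_ne_zero.mpr (Ne.symm hδ)
    rw [geom_sum_eq hδ]
    field_simp
    ring
  have hne : 1 - x ≠ 0 := sub_ne_zero.mpr hx.symm
  rw [heq.iteratedDeriv_eq,
    iteratedDeriv_fun_sub (by exact (contDiffAt_const.sub contDiffAt_id).inv hne) (by fun_prop),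
    iteratedDeriv_inv_one_sub, iteratedDeriv_geom_sum, mul_sub]

/-- The closed-form identity
`1 - γ^{n-1} Σ_{i=0}^{q-1} (1-γ)^i C(n+i-2, n-2)
  = (γ^{n-1}/(n-2)!) dⁿ⁻²/dδⁿ⁻² [δ^{n+q-2}/(1-δ)] |_{δ = 1-γ}`. -/
theorem one_sub_sum_eq_iteratedDeriv
    (n q : ℕ) (hn : 2 ≤ n) (hq : 1 ≤ q) (γ : ℝ) (hγ : γ ∈ Set.Ioo (0 : ℝ) 1) :
    1 - γ ^ (n - 1) *
        ∑ i ∈ Finset.range q, (1 - γ) ^ i * (Nat.choose (n + i - 2) (n - 2) : ℝ) =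
      γ ^ (n - 1) / (Nat.factorial (n - 2) : ℝ) *
        iteratedDeriv (n - 2) (fun δ : ℝ => δ ^ (n + q - 2) / (1 - δ)) (1 - γ) := by
  obtain ⟨m, rfl⟩ := Nat.exists_eq_add_of_le' hn
  have hsub : ∀ k, m + 2 + k - 2 = m + k := fun k => by omega
  have hγ0 : γ ≠ 0 := hγ.1.ne'
  have hfac : (m.factorial : ℝ) ≠ 0 := Nat.cast_ne_zero.mpr m.factorial_ne_zero
  simp only [hsub, Nat.add_sub_cancel, show m + 2 - 1 = m + 1 from rfl]
  rw [iteratedDeriv_pow_div_one_sub m q (by simpa using hγ0), sub_sub_cancel,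
    ← mul_assoc, div_mul_cancel₀ _ hfac, mul_sub, mul_inv_cancel₀ (pow_ne_zero _ hγ0)]
end

section
/- Let n ≥ 2 be an integer and γ ∈ (0,1). For each integer q ≥ 1 set s_q = γ^{n−1}·Σ_{i=0}^{q−1} (1−γ)^i·C(n+i−2, n−2). Then: (i) 0 < s_q < 1 for every q ≥ 1, so that ρ̃_q = (1 − s_q)^{1/(n+q−2)} is a well-defined number in (0,1); (ii) ρ̃_q → 1−γ as q → ∞; (iii) more precisely, (ρ̃_q − (1−γ) − (n−2)(1−γ)·(ln q)/q) / ((ln q)/q) → 0 as q → ∞, i.e. ρ̃_q = (1−γ) + (n−2)(1−γ)·(ln q)/q + o((ln q)/q). -/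
/-- `s_q = γ^{n-1} Σ_{i=0}^{q-1} (1-γ)^i C(n+i-2, n-2)`. -/
noncomputable def sQ (n : ℕ) (γ : ℝ) (q : ℕ) : ℝ :=
  γ ^ (n - 1) * ∑ i ∈ Finset.range q, (1 - γ) ^ i * (Nat.choose (n + i - 2) (n - 2) : ℝ)

/-- `ρ̃_q = (1 - s_q)^{1/(n+q-2)}` (real power). -/
noncomputable def rhoQ (n : ℕ) (γ : ℝ) (q : ℕ) : ℝ :=
  (1 - sQ n γ q) ^ (((n + q - 2 : ℕ) : ℝ)⁻¹)

open Filter Topology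

/-- Submultiplicativity of `q ↦ C(q + m, m)`. -/
theorem Nat.choose_add_add_le_mul (m q i : ℕ) :
    (i + q + m).choose m ≤ (q + m).choose m * (i + m).choose m := by
  induction m with
  | zero => simp
  | succ m ih =>
    have h (a : ℕ) : (a + m + 1) * (a + m).choose m = (a + (m + 1)).choose (m + 1) * (m + 1) :=
      Nat.add_one_mul_choose_eq (a + m) m
    refine le_of_mul_le_mul_right ?_ (show 0 < (m + 1) * (m + 1) by positivity)
    calc (i + q + (m + 1)).choose (m + 1) * ((m + 1) * (m + 1))
        = ((i + q + m + 1) * (m + 1)) * (i + q + m).choose m := by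
          rw [← mul_assoc, ← h]; ring
      _ ≤ ((q + m + 1) * (i + m + 1)) * ((q + m).choose m * (i + m).choose m) :=
          Nat.mul_le_mul (by nlinarith [Nat.zero_le (q * i)]) ih
      _ = ((q + m + 1) * (q + m).choose m) * ((i + m + 1) * (i + m).choose m) := by ring
      _ = _ := by rw [h, h]; ring

/-- The remainder `1 - s_q` as the tail of the negative binomial series. -/
theorem hasSum_one_sub_sQ (m q : ℕ) {γ : ℝ} (hγ : γ ∈ Set.Ioo (0 : ℝ) 1) :
    HasSum (fun i : ℕ => γ ^ (m + 1) * (((i + q + m).choose m : ℝ) * (1 - γ) ^ (i + q)))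
      (1 - sQ (m + 2) γ q) := by
  obtain ⟨h0, h1⟩ := hγ
  have hx : ‖1 - γ‖ < 1 := by rw [Real.norm_eq_abs, abs_lt]; constructor <;> linarith
  have h := (hasSum_choose_mul_geometric_of_norm_lt_one m hx).mul_left (γ ^ (m + 1))
  rw [sub_sub_cancel, mul_one_div_cancel (by positivity)] at h
  have hs : sQ (m + 2) γ q =
      ∑ i ∈ Finset.range q, γ ^ (m + 1) * (((i + m).choose m : ℝ) * (1 - γ) ^ i) := by
    rw [sQ, Finset.mul_sum]
    refine Finset.sum_congr rfl fun i _ => ?_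
    rw [show m + 2 + i - 2 = i + m by lia, show m + 2 - 2 = m by lia,
      show m + 2 - 1 = m + 1 by lia]
    ring
  rw [hs]
  exact (hasSum_nat_add_iff' q).mpr h

theorem le_one_sub_sQ (m q : ℕ) {γ : ℝ} (hγ : γ ∈ Set.Ioo (0 : ℝ) 1) :
    γ ^ (m + 1) * (((q + m).choose m : ℝ) * (1 - γ) ^ q) ≤ 1 - sQ (m + 2) γ q := by
  have h1 : 0 < 1 - γ := sub_pos.mpr hγ.2
  have h0 := hγ.1
  simpa using le_hasSum (hasSum_one_sub_sQ m q hγ) 0 fun i _ => by positivity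

theorem one_sub_sQ_le (m q : ℕ) {γ : ℝ} (hγ : γ ∈ Set.Ioo (0 : ℝ) 1) :
    1 - sQ (m + 2) γ q ≤ ((q + m).choose m : ℝ) * (1 - γ) ^ q := by
  have h1 : 0 < 1 - γ := sub_pos.mpr hγ.2
  have h0 := hγ.1
  have h := (hasSum_one_sub_sQ m 0 hγ).mul_left (((q + m).choose m : ℝ) * (1 - γ) ^ q)
  rw [show sQ (m + 2) γ 0 = 0 by simp [sQ], sub_zero, mul_one] at h
  refine hasSum_le (fun i => ?_) (hasSum_one_sub_sQ m q hγ) h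
  have hc : ((i + q + m).choose m : ℝ) ≤ (q + m).choose m * (i + m).choose m :=
    mod_cast Nat.choose_add_add_le_mul m q i
  calc γ ^ (m + 1) * (((i + q + m).choose m : ℝ) * (1 - γ) ^ (i + q))
      ≤ γ ^ (m + 1) * (((q + m).choose m * (i + m).choose m : ℝ) * (1 - γ) ^ (i + q)) := by
        gcongr
    _ = _ := by rw [add_zero]; ring

theorem one_sub_sQ_pos (m q : ℕ) {γ : ℝ} (hγ : γ ∈ Set.Ioo (0 : ℝ) 1) :
    0 < 1 - sQ (m + 2) γ q := by
  have h1 : 0 < 1 - γ := sub_pos.mpr hγ.2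
  have h0 := hγ.1
  have hc : (0 : ℝ) < (q + m).choose m := mod_cast Nat.choose_pos (by lia)
  exact lt_of_lt_of_le (by positivity) (le_one_sub_sQ m q hγ)

theorem sQ_pos (m : ℕ) {q : ℕ} (hq : 1 ≤ q) {γ : ℝ} (hγ : γ ∈ Set.Ioo (0 : ℝ) 1) :
    0 < sQ (m + 2) γ q := by
  have h1 : 0 < 1 - γ := sub_pos.mpr hγ.2
  refine mul_pos (pow_pos hγ.1 _) (Finset.sum_pos (fun i _ => ?_) ⟨0, Finset.mem_range.mpr hq⟩)
  exact mul_pos (pow_pos h1 i) (mod_cast Nat.choose_pos (by lia))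

/-- `ln (1 - s_q) = q ln (1 - γ) + m ln q + O(1)`. -/
theorem exists_log_one_sub_sQ_bounds (m : ℕ) {γ : ℝ} (hγ : γ ∈ Set.Ioo (0 : ℝ) 1) :
    ∃ b B : ℝ, ∀ q : ℕ, 1 ≤ q →
      b ≤ Real.log (1 - sQ (m + 2) γ q) - q * Real.log (1 - γ) - m * Real.log q ∧
      Real.log (1 - sQ (m + 2) γ q) - q * Real.log (1 - γ) - m * Real.log q ≤ B := by
  have h1 : 0 < 1 - γ := sub_pos.mpr hγ.2
  have h0 := hγ.1
  have hlog {c : ℝ} (hc : 0 < c) {q : ℕ} (hq : 1 ≤ q) :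
      Real.log (c * ((q : ℝ) ^ m * (1 - γ) ^ q)) =
        Real.log c + (m * Real.log q + q * Real.log (1 - γ)) := by
    have hq0 : (0 : ℝ) < q := mod_cast hq
    rw [Real.log_mul (by positivity) (by positivity), Real.log_mul (by positivity) (by positivity),
      Real.log_pow, Real.log_pow]
  have hlow : 0 < γ ^ (m + 1) / (m.factorial : ℝ) := by positivity
  have hupp : (0 : ℝ) < ((m : ℝ) + 1) ^ m := by positivity
  refine ⟨Real.log (γ ^ (m + 1) / m.factorial), Real.log (((m : ℝ) + 1) ^ m),
    fun q hq => ⟨?_, ?_⟩⟩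
  · have hq0 : (0 : ℝ) < q := mod_cast hq
    have hc : (q : ℝ) ^ m / m.factorial ≤ (q + m).choose m := by
      refine le_trans ?_ (Nat.pow_le_choose m (q + m))
      rw [show q + m + 1 - m = q + 1 by lia]
      gcongr
      simp
    have h : γ ^ (m + 1) / m.factorial * ((q : ℝ) ^ m * (1 - γ) ^ q) ≤ 1 - sQ (m + 2) γ q := by
      refine le_trans ?_ (le_one_sub_sQ m q hγ)
      calc γ ^ (m + 1) / m.factorial * ((q : ℝ) ^ m * (1 - γ) ^ q)
          = γ ^ (m + 1) * ((q : ℝ) ^ m / m.factorial * (1 - γ) ^ q) := by ring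
        _ ≤ _ := by gcongr
    have := Real.log_le_log (by positivity) h
    rw [hlog hlow hq] at this
    linarith
  · have hq1 : (1 : ℝ) ≤ q := mod_cast hq
    have hc : ((q + m).choose m : ℝ) ≤ ((m : ℝ) + 1) ^ m * (q : ℝ) ^ m := by
      calc ((q + m).choose m : ℝ) ≤ ((q + m : ℕ) : ℝ) ^ m := mod_cast Nat.choose_le_pow _ _
        _ ≤ (((m : ℝ) + 1) * q) ^ m := by
          gcongr
          push_cast
          nlinarith [Nat.cast_nonneg (α := ℝ) m]
        _ = _ := mul_pow _ _ _
    have h : 1 - sQ (m + 2) γ q ≤ ((m : ℝ) + 1) ^ m * ((q : ℝ) ^ m * (1 - γ) ^ q) := by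
      refine (one_sub_sQ_le m q hγ).trans ?_
      rw [← mul_assoc]
      gcongr
    have := Real.log_le_log (one_sub_sQ_pos m q hγ) h
    rw [hlog hupp hq] at this
    linarith

theorem tendsto_log_natCast_div_self :
    Tendsto (fun q : ℕ => Real.log q / q) atTop (𝓝 0) :=
  Real.isLittleO_log_id_atTop.tendsto_div_nhds_zero.comp tendsto_natCast_atTop_atTop

theorem eventually_log_natCast_div_self_ne_zero :
    ∀ᶠ q : ℕ in atTop, Real.log q / q ≠ 0 := by
  filter_upwards [eventually_ge_atTop 2] with q hq
  have hlq : 0 < Real.log q := Real.log_pos (mod_cast hq)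
  positivity

/-- If `(D q) / (l q) → c` and `l → 0` then `(exp (D q) - 1) / (l q) → c`. -/
theorem Real.tendsto_exp_sub_one_div {ι : Type*} {f : Filter ι} {D l : ι → ℝ} {c : ℝ}
    (hl : Tendsto l f (𝓝 0)) (hl0 : ∀ᶠ q in f, l q ≠ 0)
    (hD : Tendsto (fun q => D q / l q) f (𝓝 c)) :
    Tendsto (fun q => (Real.exp (D q) - 1) / l q) f (𝓝 c) := by
  have hD0 : Tendsto D f (𝓝 0) := by
    have := hD.mul hl
    rw [mul_zero] at this
    refine this.congr' ?_
    filter_upwards [hl0] with q hq using div_mul_cancel₀ _ hq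
  have hs : Tendsto (fun q => dslope Real.exp 0 (D q)) f (𝓝 1) := by
    have := (continuousAt_dslope_same.mpr (Real.differentiableAt_exp (x := 0))).tendsto
    rw [dslope_same, Real.deriv_exp, Real.exp_zero] at this
    exact this.comp hD0
  have := hD.mul hs
  rw [mul_one] at this
  refine this.congr fun q => ?_
  have h := sub_smul_dslope Real.exp 0 (D q)
  rw [sub_zero, smul_eq_mul, Real.exp_zero] at h
  rw [← h]
  ring

/-- `ln ρ̃_q - ln (1 - γ)` is asymptotic to `m (ln q) / q`. -/
theorem tendsto_log_rhoQ_sub_div (m : ℕ) {γ : ℝ} (hγ : γ ∈ Set.Ioo (0 : ℝ) 1) :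
    Tendsto (fun q : ℕ => (Real.log (rhoQ (m + 2) γ q) - Real.log (1 - γ)) / (Real.log q / q))
      atTop (𝓝 m) := by
  obtain ⟨b, B, hb⟩ := exists_log_one_sub_sQ_bounds m hγ
  have hlogtop : Tendsto (fun q : ℕ => Real.log q) atTop atTop :=
    Real.tendsto_log_atTop.comp tendsto_natCast_atTop_atTop
  have herr : Tendsto (fun q : ℕ => (Real.log (1 - sQ (m + 2) γ q) - q * Real.log (1 - γ) -
      m * Real.log q - m * Real.log (1 - γ)) * (Real.log q)⁻¹) atTop (𝓝 0) := by
    refine bdd_le_mul_tendsto_zero (b := b - m * Real.log (1 - γ))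
      (B := B - m * Real.log (1 - γ)) ?_ ?_ hlogtop.inv_tendsto_atTop
    · filter_upwards [eventually_ge_atTop 1] with q hq
      linarith [(hb q hq).1]
    · filter_upwards [eventually_ge_atTop 1] with q hq
      linarith [(hb q hq).2]
  have h := (herr.const_add (m : ℝ)).mul (tendsto_natCast_div_add_atTop (m : ℝ))
  rw [add_zero, mul_one] at h
  refine h.congr' ?_
  filter_upwards [eventually_ge_atTop 2] with q hq
  have hq0 : (0 : ℝ) < q := by positivity
  have hlq : 0 < Real.log q := Real.log_pos (mod_cast hq)
  have hqm : (0 : ℝ) < q + m := by positivity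
  rw [rhoQ, Real.log_rpow (one_sub_sQ_pos m q hγ), show m + 2 + q - 2 = q + m by lia]
  push_cast
  field_simp
  ring

theorem rhoQ_mem_Ioo (m : ℕ) {q : ℕ} (hq : 1 ≤ q) {γ : ℝ} (hγ : γ ∈ Set.Ioo (0 : ℝ) 1) :
    rhoQ (m + 2) γ q ∈ Set.Ioo (0 : ℝ) 1 := by
  have hpos := one_sub_sQ_pos m q hγ
  refine ⟨Real.rpow_pos_of_pos hpos _, Real.rpow_lt_one hpos.le ?_ ?_⟩
  · linarith [sQ_pos m hq hγ]
  · exact inv_pos.mpr (mod_cast (by lia))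

theorem tendsto_rhoQ_sub_div (m : ℕ) {γ : ℝ} (hγ : γ ∈ Set.Ioo (0 : ℝ) 1) :
    Tendsto (fun q : ℕ => (rhoQ (m + 2) γ q - (1 - γ)) / (Real.log q / q))
      atTop (𝓝 (m * (1 - γ))) := by
  have h1 : 0 < 1 - γ := sub_pos.mpr hγ.2
  refine ((Real.tendsto_exp_sub_one_div tendsto_log_natCast_div_self
    eventually_log_natCast_div_self_ne_zero
    (tendsto_log_rhoQ_sub_div m hγ)).mul_const (1 - γ)).congr' ?_
  filter_upwards [eventually_ge_atTop 1] with q hq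
  rw [Real.exp_sub, Real.exp_log (rhoQ_mem_Ioo m hq hγ).1, Real.exp_log h1]
  field_simp

/-- Lemma 4 (asymptotics): (i) `0 < s_q < 1`, so `ρ̃_q ∈ (0,1)` is well defined;
(ii) `ρ̃_q → 1-γ` as `q → ∞`;
(iii) `ρ̃_q = (1-γ) + (n-2)(1-γ) (ln q)/q + o((ln q)/q)`. -/
theorem rhoQ_asymptotics
    (n : ℕ) (hn : 2 ≤ n) (γ : ℝ) (hγ : γ ∈ Set.Ioo (0 : ℝ) 1) :
    (∀ q : ℕ, 1 ≤ q →
      0 < sQ n γ q ∧ sQ n γ q < 1 ∧ rhoQ n γ q ∈ Set.Ioo (0 : ℝ) 1) ∧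
    Filter.Tendsto (fun q : ℕ => rhoQ n γ q) Filter.atTop (nhds (1 - γ)) ∧
    Filter.Tendsto (fun q : ℕ =>
        (rhoQ n γ q - (1 - γ) - ((n : ℝ) - 2) * (1 - γ) * Real.log q / q) /
          (Real.log q / q))
      Filter.atTop (nhds 0) := by
  obtain ⟨m, rfl⟩ := Nat.exists_eq_add_of_le' hn
  have hlim := tendsto_rhoQ_sub_div m hγ
  refine ⟨fun q hq => ⟨sQ_pos m hq hγ, by linarith [one_sub_sQ_pos m q hγ],
    rhoQ_mem_Ioo m hq hγ⟩, ?_, ?_⟩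
  · have h := (hlim.mul tendsto_log_natCast_div_self).add_const (1 - γ)
    rw [mul_zero, zero_add] at h
    refine h.congr' ?_
    filter_upwards [eventually_log_natCast_div_self_ne_zero] with q hq
    rw [div_mul_cancel₀ _ hq, sub_add_cancel]
  · have h := hlim.sub_const (m * (1 - γ))
    rw [sub_self] at h
    refine h.congr' ?_
    filter_upwards [eventually_log_natCast_div_self_ne_zero] with q hq
    rw [mul_div_assoc, sub_div (rhoQ (m + 2) γ q - (1 - γ)), mul_div_cancel_right₀ _ hq]
    push_cast
    ring
end
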